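/- Let φ be a weakly holomorphic Jacobi form of weight 2 and index m. Then R_{m₁,m₂}(φ) = 0 for every unordered factorization m = m₁·m₂; in particular, taking m₁ = 1, the constant-coefficient sum R[φ] = ∑_{r∈ℤ} c_φ(0,r) vanishes. -/

import Mathlib

noncomputable section

open Complex Filter Topology MeasureTheory
open scoped Classical

/-- `ee x = e^{2πix}`. -/
def ee (x : ℂ) : ℂ := Complex.exp (2 * (Real.pi : ℂ) * Complex.I * x)

/-- The index-`m` elliptic transformation law on `ℍ × ℂ`. -/
def EllipticLaw (m : ℕ) (φ : ℂ → ℂ → ℂ) : Prop :=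
  ∀ τ : ℂ, 0 < τ.im → ∀ z : ℂ, ∀ lam mu : ℤ,
    φ τ (z + (lam : ℂ) * τ + (mu : ℂ)) =
      ee (-(m : ℂ) * ((lam : ℂ) ^ 2 * τ + 2 * (lam : ℂ) * z)) * φ τ z

/-- The weight-`k` index-`m` modular transformation law on `ℍ × ℂ`. -/
def ModularLaw (k : ℤ) (m : ℕ) (φ : ℂ → ℂ → ℂ) : Prop :=
  ∀ τ : ℂ, 0 < τ.im → ∀ z : ℂ, ∀ a b c d : ℤ, a * d - b * c = 1 →
    φ (((a : ℂ) * τ + (b : ℂ)) / ((c : ℂ) * τ + (d : ℂ))) (z / ((c : ℂ) * τ + (d : ℂ))) =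
      ((c : ℂ) * τ + (d : ℂ)) ^ k *
        ee ((m : ℂ) * (c : ℂ) * z ^ 2 / ((c : ℂ) * τ + (d : ℂ))) * φ τ z

/-- The theta function `θ_{m,ℓ}(τ,z) = ∑_{r ≡ ℓ (mod 2m)} q^{r²/4m} y^r`. -/
def jTheta (m : ℕ) (l : ℤ) (τ z : ℂ) : ℂ :=
  ∑' n : ℤ, ee (((l : ℂ) + 2 * (m : ℂ) * (n : ℂ)) ^ 2 / (4 * (m : ℂ)) * τ +
      ((l : ℂ) + 2 * (m : ℂ) * (n : ℂ)) * z)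

/-- The point `z_s = ατ + β` for `s = (α,β) ∈ ℚ²`. -/
def zpt (s : ℚ × ℚ) (τ : ℂ) : ℂ := (s.1 : ℚ) * τ + (s.2 : ℚ)

/-- A holomorphic function on `ℍ × ℂ` satisfying the index-`m` elliptic transformation law,
together with its Fourier coefficient data `coeff Δ ℓ = C(Δ,ℓ)` (so that
`c(n,r) = C(4nm - r², r)`, `C(Δ,ℓ)` depends on `ℓ` only modulo `2m`, and `C(Δ,ℓ) = 0` on
pairs with `Δ + ℓ² ≢ 0 (mod 4m)`). -/
structure EllFormData (m : ℕ) where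
  toFun : ℂ → ℂ → ℂ
  coeff : ℤ → ℤ → ℂ
  holo : ∀ τ z : ℂ, 0 < τ.im → DifferentiableAt ℂ (fun p : ℂ × ℂ => toFun p.1 p.2) (τ, z)
  elliptic : EllipticLaw m toFun
  expansion : ∀ τ z : ℂ, 0 < τ.im →
    HasSum (fun p : ℤ × ℤ => coeff (4 * (m : ℤ) * p.1 - p.2 ^ 2) p.2 *
      ee ((p.1 : ℂ) * τ + (p.2 : ℂ) * z)) (toFun τ z)
  periodic : ∀ Δ l : ℤ, coeff Δ (l + 2 * (m : ℤ)) = coeff Δ l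
  support : ∀ Δ l : ℤ, ¬ (4 * (m : ℤ)) ∣ (Δ + l ^ 2) → coeff Δ l = 0

/-- An elliptic form is weak if `c(n,r) = 0` for `n < 0`. -/
def IsWeakC (m : ℕ) (C : ℤ → ℤ → ℂ) : Prop :=
  ∀ n r : ℤ, n < 0 → C (4 * (m : ℤ) * n - r ^ 2) r = 0

/-- Even coefficients: `C(Δ,-ℓ) = C(Δ,ℓ)`. -/
def IsEvenC (C : ℤ → ℤ → ℂ) : Prop := ∀ Δ l : ℤ, C Δ (-l) = C Δ l

/-- Holomorphic (as opposed to weak): `C(Δ,ℓ) = 0` for `Δ < 0`. -/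
def IsHolC (C : ℤ → ℤ → ℂ) : Prop := ∀ Δ l : ℤ, Δ < 0 → C Δ l = 0

/-- Cuspidal: `C(Δ,ℓ) = 0` for `Δ ≤ 0`. -/
def IsCuspC (C : ℤ → ℤ → ℂ) : Prop := ∀ Δ l : ℤ, Δ ≤ 0 → C Δ l = 0

/-- Optimal growth: `C(Δ,ℓ) = 0` for `Δ < -1`. -/
def IsOGC (C : ℤ → ℤ → ℂ) : Prop := ∀ Δ l : ℤ, Δ < -1 → C Δ l = 0

/-- A representative `ℓ* = ℓ·(a·x - b·y)` (with `ax + by = gcd(a,b) = 1`) of the residue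
class determined by `ℓ* ≡ -ℓ (mod 2a)`, `ℓ* ≡ ℓ (mod 2b)`, used to define the
Atkin–Lehner involution `W_a` on coefficients. -/
def lstar (a b : ℕ) (l : ℤ) : ℤ := l * ((a : ℤ) * Nat.gcdA a b - (b : ℤ) * Nat.gcdB a b)

/-- The coefficients of `φ|u_t` (index `m/t²`):
`C_{φ|u_t}(Δ,ℓ) = ∑_{r mod 2m/t, r ≡ ℓ (mod 2m/t²)} C_φ(Δt², rt)`. -/
def CoeffU (m t : ℕ) (C : ℤ → ℤ → ℂ) (Δ l : ℤ) : ℂ :=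
  ∑ j ∈ Finset.range t,
    C (Δ * (t : ℤ) ^ 2) ((l + 2 * (m : ℤ) / (t : ℤ) ^ 2 * (j : ℤ)) * (t : ℤ))

/-- For an unordered factorization `m = m₁·m₂` with `t = gcd(m₁,m₂)`,
`R_{m₁,m₂}(φ) = R[(φ|u_t)|W_{m₁/t}] = ∑_{r∈ℤ} C_{(φ|u_t)|W_{m₁/t}}(-r², r)`. -/
def Rfactor (m : ℕ) (C : ℤ → ℤ → ℂ) (m₁ m₂ : ℕ) : ℂ :=
  ∑' r : ℤ, CoeffU m (Nat.gcd m₁ m₂) C (-(r ^ 2))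
      (lstar (m₁ / Nat.gcd m₁ m₂) (m₂ / Nat.gcd m₁ m₂) r)


lemma aux_mem_ball (τ : ℂ) : τ ∈ Metric.ball (2 * Complex.I) (Real.sqrt 3) ↔
    τ.re ^ 2 + τ.im ^ 2 + 1 < 4 * τ.im := by
  rw [Metric.mem_ball, Complex.dist_eq, ← abs_of_nonneg (norm_nonneg (τ - 2 * Complex.I)),
    ← Real.sqrt_sq_eq_abs, Real.sqrt_lt_sqrt_iff (by positivity), ← Complex.normSq_eq_norm_sq,
    Complex.normSq_apply]
  simp only [Complex.sub_re, Complex.sub_im, Complex.mul_re, Complex.mul_im, Complex.I_re,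
    Complex.I_im]
  norm_num
  constructor <;> intro h <;> nlinarith

lemma aux_inv_ball (τ : ℂ) (h : τ ∈ Metric.ball (2 * Complex.I) (Real.sqrt 3)) :
    (-1 / τ) ∈ Metric.ball (2 * Complex.I) (Real.sqrt 3) := by
  rw [aux_mem_ball] at *
  have him : 0 < τ.im := by nlinarith [sq_nonneg τ.re, sq_nonneg τ.im]
  have hn : 0 < Complex.normSq τ := by
    apply Complex.normSq_pos.2
    rintro rfl
    simp at him
  have h1 : (-1 / τ).re = - τ.re / Complex.normSq τ := by
    simp [Complex.div_re]
  have h2 : (-1 / τ).im = τ.im / Complex.normSq τ := by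
    simp [neg_div]
  rw [h1, h2]
  have h3 : Complex.normSq τ = τ.re ^ 2 + τ.im ^ 2 := by
    rw [Complex.normSq_apply]; ring
  have h4 : (-τ.re / Complex.normSq τ) ^ 2 + (τ.im / Complex.normSq τ) ^ 2
      = 1 / Complex.normSq τ := by
    field_simp
    rw [h3]
  rw [h4]
  rw [← h3] at h
  have : (1 + Complex.normSq τ) / Complex.normSq τ < (4 * τ.im) / Complex.normSq τ := by
    apply div_lt_div_of_pos_right _ hn
    linarith
  calc _ = (1 + Complex.normSq τ) / Complex.normSq τ := by field_simp
    _ < _ := this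
    _ = _ := by ring

/-- the point `e^{2πi/3}` -/
def rhoPt : ℂ := ⟨-1/2, Real.sqrt 3 / 2⟩

lemma rhoPt_mem (x : ℝ) (h0 : 0 ≤ x) (h1 : x ≤ 1) :
    rhoPt + x ∈ Metric.ball (2 * Complex.I) (Real.sqrt 3) := by
  rw [aux_mem_ball]
  have h : Real.sqrt 3 ^ 2 = 3 := Real.sq_sqrt (by norm_num)
  have h' : 1.5 < Real.sqrt 3 := Real.lt_sqrt_of_sq_lt (by norm_num)
  simp [rhoPt]
  nlinarith

lemma rhoPt_inv : -1 / rhoPt = rhoPt + 1 := by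
  have h : Real.sqrt 3 ^ 2 = 3 := Real.sq_sqrt (by norm_num)
  have hne : rhoPt ≠ 0 := by
    intro h0
    have := congrArg Complex.re h0
    norm_num [rhoPt] at this
  rw [div_eq_iff hne]
  apply Complex.ext
  · simp [rhoPt]; nlinarith
  · simp [rhoPt]; nlinarith

lemma rhoPt_im : 0 < rhoPt.im := by simp [rhoPt]

lemma aux_int_zero (F : ℂ → ℂ) (hF : ∀ τ : ℂ, 0 < τ.im → DifferentiableAt ℂ F τ)
    (hS : ∀ τ : ℂ, 0 < τ.im → F (-1 / τ) = τ ^ 2 * F τ) :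
    ∫ x in (0:ℝ)..1, F (rhoPt + x) = 0 := by
  set B := Metric.ball (2 * Complex.I) (Real.sqrt 3) with hB
  have him : ∀ τ ∈ B, 0 < τ.im := by
    intro τ h
    rw [hB, aux_mem_ball] at h
    nlinarith [sq_nonneg τ.re, sq_nonneg τ.im]
  have hFd : DifferentiableOn ℂ F B := fun τ h => (hF τ (him τ h)).differentiableWithinAt
  obtain ⟨G, hG⟩ := hFd.isExactOn_ball
  have hne : ∀ τ ∈ B, τ ≠ 0 := by
    rintro τ h rfl
    simpa using him _ h
  have hH : ∀ τ ∈ B, HasDerivAt (fun τ => G (-1 / τ) - G τ) 0 τ := by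
    intro τ h
    have h1 : HasDerivAt (fun τ : ℂ => -1 / τ) (1 / τ ^ 2) τ := by
      have := (hasDerivAt_inv (hne τ h)).const_mul (-1 : ℂ)
      refine this.congr_deriv ?_ |>.congr_of_eventuallyEq ?_
      · field_simp
      · exact Filter.Eventually.of_forall fun w => by simp [div_eq_mul_inv]
    have h2 := (hG _ (aux_inv_ball τ h))
    have h3 := (HasDerivAt.comp τ h2 h1).sub (hG τ h)
    refine h3.congr_deriv ?_
    rw [hS τ (him τ h)]
    have := hne τ h
    field_simp
    ring
  have hI : Complex.I ∈ B := by
    rw [hB, aux_mem_ball]; norm_num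
  have hr : rhoPt ∈ B := by
    have := rhoPt_mem 0 le_rfl zero_le_one
    rwa [Complex.ofReal_zero, add_zero] at this
  have hc := IsOpen.is_const_of_deriv_eq_zero (𝕜 := ℂ) Metric.isOpen_ball
    (convex_ball (2 * Complex.I) (Real.sqrt 3)).isPreconnected
    (fun τ h => (hH τ h).differentiableAt.differentiableWithinAt)
    (fun τ h => (hH τ h).deriv) hr hI
  have hi : -1 / Complex.I = Complex.I := by
    rw [div_eq_iff Complex.I_ne_zero]; simp
  simp only [hi, rhoPt_inv, sub_self] at hc
  have hd : ∀ x ∈ Set.uIcc (0:ℝ) 1,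
      HasDerivAt (fun x : ℝ => G (rhoPt + x)) (F (rhoPt + x)) x := by
    intro x hx
    rw [Set.uIcc_of_le zero_le_one] at hx
    have h1 := hG _ (rhoPt_mem x hx.1 hx.2)
    have h2 : HasDerivAt (fun w : ℂ => G (rhoPt + w)) (F (rhoPt + x)) (x : ℂ) := by
      simpa using HasDerivAt.comp_const_add rhoPt (x : ℂ) h1
    exact h2.comp_ofReal
  have hcont : ContinuousOn (fun x : ℝ => F (rhoPt + x)) (Set.uIcc (0:ℝ) 1) := by
    intro x hx
    apply ContinuousAt.continuousWithinAt
    have : ContinuousAt F (rhoPt + x) := (hF _ (by simpa using rhoPt_im)).continuousAt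
    exact ContinuousAt.comp (f := fun x : ℝ => rhoPt + (x : ℂ)) this (by fun_prop)
  rw [intervalIntegral.integral_eq_sub_of_hasDerivAt hd hcont.intervalIntegrable]
  simpa using hc

lemma ee_add (x y : ℂ) : ee (x + y) = ee x * ee y := by
  unfold ee; rw [mul_add, Complex.exp_add]

lemma ee_int (n : ℤ) : ee n = 1 := by
  unfold ee
  rw [Complex.exp_eq_one_iff]
  exact ⟨n, by ring⟩

lemma ee_zero : ee 0 = 1 := by simp [ee]

lemma ee_eq_one {x : ℂ} (h : ee x = 1) : ∃ n : ℤ, x = n := by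
  unfold ee at h
  rw [Complex.exp_eq_one_iff] at h
  obtain ⟨n, hn⟩ := h
  refine ⟨n, ?_⟩
  have h2 : (2 * (Real.pi : ℂ) * Complex.I) ≠ 0 := Complex.two_pi_I_ne_zero
  apply mul_left_cancel₀ h2
  rw [hn]; ring

lemma ee_nat_mul (n : ℕ) (x : ℂ) : ee (n * x) = ee x ^ n := by
  unfold ee; rw [← Complex.exp_nat_mul]; congr 1; ring

lemma norm_ee_add_real (x : ℂ) (y : ℝ) : ‖ee (x + y)‖ = ‖ee x‖ := by
  unfold ee
  rw [Complex.norm_exp, Complex.norm_exp]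
  simp

lemma ee_sum (M : ℕ) (hM : 0 < M) (k : ℤ) :
    ∑ μ ∈ Finset.range M, ee ((k : ℂ) * (μ : ℂ) / M) = if (M : ℤ) ∣ k then (M : ℂ) else 0 := by
  have hM' : (M : ℂ) ≠ 0 := by exact_mod_cast hM.ne'
  have h1 : ∀ μ ∈ Finset.range M, ee ((k : ℂ) * (μ : ℂ) / M) = ee ((k : ℂ) / M) ^ μ := by
    intro μ _
    rw [← ee_nat_mul]; congr 1; ring
  rw [Finset.sum_congr rfl h1]
  split_ifs with h
  · obtain ⟨c, rfl⟩ := h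
    have : (((M : ℤ) * c : ℤ) : ℂ) / M = (c : ℤ) := by
      push_cast; field_simp
    rw [this, ee_int]; simp
  · rw [geom_sum_eq, ← ee_nat_mul]
    · have : (M : ℂ) * ((k : ℂ) / M) = k := by field_simp
      rw [this, ee_int]; simp
    · intro h1
      obtain ⟨n, hn⟩ := ee_eq_one h1
      apply h
      refine ⟨n, ?_⟩
      rw [div_eq_iff hM'] at hn
      have : (k : ℂ) = ((M * n : ℤ) : ℂ) := by rw [hn]; push_cast; ring
      exact_mod_cast this

lemma ee_integral (N : ℤ) (τ : ℂ) :
    ∫ x in (0:ℝ)..1, ee ((N : ℂ) * (τ + x)) = if N = 0 then 1 else 0 := by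
  split_ifs with h
  · subst h; simp [ee_zero]
  · have h1 : ∀ x : ℝ, ee ((N : ℂ) * (τ + x)) =
        ee (N * τ) * Complex.exp ((2 * (Real.pi : ℂ) * Complex.I * N) * x) := by
      intro x
      rw [mul_add, ee_add]; congr 1
      unfold ee; congr 1; ring
    simp_rw [h1]
    rw [intervalIntegral.integral_const_mul, integral_exp_mul_complex]
    · have : Complex.exp ((2 * (Real.pi : ℂ) * Complex.I * N) * (1:ℝ)) = 1 := by
        have := ee_int N
        simpa [ee] using this
      rw [this]; simp
    · exact mul_ne_zero Complex.two_pi_I_ne_zero (by exact_mod_cast h)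

lemma sum_range_neg (M : ℕ) (h : ℤ → ℂ) (hp : ∀ k, h (k + M) = h k) :
    ∑ k ∈ Finset.range M, h (-(k : ℤ)) = ∑ k ∈ Finset.range M, h k := by
  rw [← Finset.sum_range_reflect]
  have h1 : ∀ j ∈ Finset.range M, h (-((M - 1 - j : ℕ) : ℤ)) = h ((j + 1 : ℕ) : ℤ) := by
    intro j hj
    rw [Finset.mem_range] at hj
    rw [← hp]; congr 1; omega
  rw [Finset.sum_congr rfl h1]
  have h2 := Finset.sum_range_succ (fun k : ℕ => h k) M
  rw [Finset.sum_range_succ'] at h2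
  have h3 : h (M : ℤ) = h 0 := by simpa using hp 0
  simp only [h3, Nat.cast_zero] at h2
  exact add_right_cancel h2


/-- the values of `φ` at torsion points, suitably normalised -/
def fpt {m : ℕ} (φ : EllFormData m) (M : ℕ) (l k : ℤ) (τ : ℂ) : ℂ :=
  ee ((m : ℂ) * (((l : ℂ) / M) ^ 2 * τ + (l : ℂ) / M * ((k : ℂ) / M))) *
    φ.toFun τ ((l : ℂ) / M * τ + (k : ℂ) / M)

lemma fpt_diff {m : ℕ} (φ : EllFormData m) (M : ℕ) (l k : ℤ) (τ : ℂ) (hτ : 0 < τ.im) :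
    DifferentiableAt ℂ (fpt φ M l k) τ := by
  unfold fpt
  apply DifferentiableAt.mul
  · unfold ee; fun_prop
  · have h := φ.holo τ ((l : ℂ) / M * τ + (k : ℂ) / M) hτ
    exact DifferentiableAt.comp (f := fun τ : ℂ => (τ, (l : ℂ) / M * τ + (k : ℂ) / M)) τ h
      (by fun_prop)

lemma fpt_S {m : ℕ} (φ : EllFormData m) (hmod : ModularLaw 2 m φ.toFun) (M : ℕ) (l k : ℤ)
    (τ : ℂ) (hτ : 0 < τ.im) : fpt φ M l k (-1 / τ) = τ ^ 2 * fpt φ M k (-l) τ := by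
  have hne : τ ≠ 0 := by rintro rfl; simp at hτ
  have h := hmod τ hτ ((k : ℂ) / M * τ + ((-l : ℤ) : ℂ) / M) 0 (-1) 1 0 (by norm_num)
  have e1 : (((0:ℤ) : ℂ) * τ + ((-1 : ℤ) : ℂ)) / (((1:ℤ) : ℂ) * τ + ((0 : ℤ) : ℂ)) = -1 / τ := by
    simp
  have e2 : (((k : ℂ) / M * τ + ((-l : ℤ) : ℂ) / M)) / (((1:ℤ) : ℂ) * τ + ((0 : ℤ) : ℂ))
      = (l : ℂ) / M * (-1 / τ) + (k : ℂ) / M := by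
    push_cast
    rw [one_mul, add_zero, add_div, mul_div_assoc, div_self hne]
    ring
  rw [e1, e2] at h
  unfold fpt
  rw [h]
  have e3 : (((1:ℤ) : ℂ) * τ + ((0 : ℤ) : ℂ)) = τ := by simp
  rw [e3]
  have e4 : ((m : ℂ) * (((l : ℂ) / M) ^ 2 * (-1 / τ) + (l : ℂ) / M * ((k : ℂ) / M))) +
      (m : ℂ) * ((1 : ℤ) : ℂ) * ((k : ℂ) / M * τ + ((-l : ℤ) : ℂ) / M) ^ 2 / τ =
      (m : ℂ) * (((k : ℂ) / M) ^ 2 * τ + (k : ℂ) / M * (((-l : ℤ) : ℂ) / M)) := by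
    push_cast
    rw [neg_div (M : ℂ) (l : ℂ)]
    generalize (k : ℂ) / M = b
    generalize (l : ℂ) / M = a
    field_simp
    ring
  rw [← e4, ee_add]
  have : τ ^ (2 : ℤ) = τ ^ 2 := by norm_cast
  rw [this]
  ring

lemma fpt_per2 {m : ℕ} (φ : EllFormData m) (M M' : ℕ) (hM : 0 < M) (hMM : M * M' = m) (l k : ℤ)
    (τ : ℂ) (hτ : 0 < τ.im) : fpt φ M l (k + M) τ = fpt φ M l k τ := by
  have hM' : (M : ℂ) ≠ 0 := by exact_mod_cast hM.ne'
  have h := φ.elliptic τ hτ ((l : ℂ) / M * τ + (k : ℂ) / M) 0 1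
  unfold fpt
  have e1 : (l : ℂ) / M * τ + (((k + M : ℤ)) : ℂ) / M =
      (l : ℂ) / M * τ + (k : ℂ) / M + ((0 : ℤ) : ℂ) * τ + ((1 : ℤ) : ℂ) := by
    push_cast; field_simp; ring
  rw [e1, h, ← mul_assoc, ← ee_add]
  congr 1
  have e2 : (m : ℂ) * (((l : ℂ) / M) ^ 2 * τ + (l : ℂ) / M * (((k + M : ℤ) : ℂ) / M)) +
     -(m : ℂ) * (((0 : ℤ) : ℂ) ^ 2 * τ + 2 * ((0 : ℤ) : ℂ) * ((l : ℂ) / M * τ + (k : ℂ) / M)) =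
     (m : ℂ) * (((l : ℂ) / M) ^ 2 * τ + (l : ℂ) / M * ((k : ℂ) / M)) + ((M' * l : ℤ) : ℂ) := by
    rw [← hMM]; push_cast; field_simp; ring
  rw [e2, ee_add, ee_int, mul_one]

lemma sum_fpt_S {m : ℕ} (φ : EllFormData m) (hmod : ModularLaw 2 m φ.toFun) (M M' : ℕ)
    (hM : 0 < M) (hMM : M * M' = m)
    (τ : ℂ) (hτ : 0 < τ.im) :
    (∑ l ∈ Finset.range M, ∑ k ∈ Finset.range M, fpt φ M l k (-1 / τ)) =
    τ ^ 2 * ∑ l ∈ Finset.range M, ∑ k ∈ Finset.range M, fpt φ M l k τ := by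
  simp_rw [fpt_S φ hmod M _ _ τ hτ]
  rw [Finset.sum_comm, Finset.mul_sum]
  refine Finset.sum_congr rfl fun k _ => ?_
  rw [← Finset.mul_sum, sum_range_neg M (fun l => fpt φ M k l τ)
    (fun l => fpt_per2 φ M M' hM hMM k l τ hτ)]

/-- the term of the Fourier expansion -/
def uTerm {m : ℕ} (φ : EllFormData m) (M M' : ℕ) (l : ℤ) (p : ℤ × ℤ) (τ : ℂ) : ℂ :=
  φ.coeff (4 * (m : ℤ) * p.1 - p.2 ^ 2) p.2 *
   ((if (M : ℤ) ∣ (M' * l + p.2) then (M : ℂ) else 0) *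
    ee (((p.1 : ℂ) + l * ((M' * l + p.2 : ℤ) : ℂ) / M) * τ))

lemma fpt_hasSum {m : ℕ} (φ : EllFormData m) (M M' : ℕ) (hM : 0 < M) (hMM : M * M' = m) (l : ℤ)
    (τ : ℂ) (hτ : 0 < τ.im) :
    HasSum (fun p => uTerm φ M M' l p τ) (∑ k ∈ Finset.range M, fpt φ M l k τ) := by
  have hM' : (M : ℂ) ≠ 0 := by exact_mod_cast hM.ne'
  have h1 : ∀ k ∈ Finset.range M, HasSum (fun p : ℤ × ℤ =>
      φ.coeff (4 * (m : ℤ) * p.1 - p.2 ^ 2) p.2 * (ee (((M' * l + p.2 : ℤ) : ℂ) * (k : ℂ) / M) *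
      ee (((p.1 : ℂ) + l * ((M' * l + p.2 : ℤ) : ℂ) / M) * τ))) (fpt φ M l k τ) := by
    intro k _
    have h := (φ.expansion τ ((l : ℂ) / M * τ + ((k : ℤ) : ℂ) / M) hτ).mul_left
      (ee ((m : ℂ) * (((l : ℂ) / M) ^ 2 * τ + (l : ℂ) / M * (((k : ℤ) : ℂ) / M))))
    refine h.congr_fun ?_
    intro p
    rw [← ee_add, mul_left_comm, ← ee_add]
    congr 2
    rw [← hMM]
    push_cast
    field_simp
    ring
  have h2 := hasSum_sum h1
  refine h2.congr_fun ?_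
  intro p
  unfold uTerm
  rw [← Finset.mul_sum, ← Finset.sum_mul, ee_sum M hM]

lemma uTerm_norm {m : ℕ} (φ : EllFormData m) (M M' : ℕ) (l : ℤ) (p : ℤ × ℤ) (τ : ℂ) (x : ℝ) :
    ‖uTerm φ M M' l p (τ + x)‖ = ‖uTerm φ M M' l p τ‖ := by
  unfold uTerm
  rw [norm_mul, norm_mul, norm_mul, norm_mul]
  congr 2
  have : ((p.1 : ℂ) + l * ((M' * l + p.2 : ℤ) : ℂ) / M) * (τ + x) =
     ((p.1 : ℂ) + l * ((M' * l + p.2 : ℤ) : ℂ) / M) * τ +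
      ((((p.1 : ℝ) + l * ((M' * l + p.2 : ℤ) : ℝ) / M) * x : ℝ) : ℂ) := by
    push_cast; ring
  rw [this, norm_ee_add_real]

/-- the integral of the term -/
def vTerm {m : ℕ} (φ : EllFormData m) (M M' : ℕ) (l : ℤ) (p : ℤ × ℤ) : ℂ :=
  if (M : ℤ) ∣ (M' * l + p.2) ∧ (M : ℤ) * p.1 + l * (M' * l + p.2) = 0 then
    φ.coeff (4 * (m : ℤ) * p.1 - p.2 ^ 2) p.2 * (M : ℂ) else 0

lemma uTerm_int {m : ℕ} (φ : EllFormData m) (M M' : ℕ) (hM : 0 < M) (l : ℤ) (p : ℤ × ℤ) (τ : ℂ) :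
    ∫ x in (0:ℝ)..1, uTerm φ M M' l p (τ + x) = vTerm φ M M' l p := by
  have hM' : (M : ℂ) ≠ 0 := by exact_mod_cast hM.ne'
  unfold uTerm vTerm
  by_cases h : (M : ℤ) ∣ (M' * l + p.2)
  · obtain ⟨s, hs⟩ := h
    have e : ((p.1 : ℂ) + l * ((M' * l + p.2 : ℤ) : ℂ) / M) = ((p.1 + l * s : ℤ) : ℂ) := by
      rw [hs]; push_cast; field_simp
    simp only [e]
    simp only [hs, dvd_mul_right, if_true, true_and]
    rw [intervalIntegral.integral_const_mul, intervalIntegral.integral_const_mul, ee_integral]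
    have e2 : (M : ℤ) * p.1 + l * (M * s) = 0 ↔ p.1 + l * s = 0 := by
      have : (M : ℤ) * p.1 + l * (M * s) = M * (p.1 + l * s) := by ring
      rw [this, mul_eq_zero]
      simp [hM.ne']
    simp only [e2]
    split_ifs <;> simp
  · simp [h]

lemma sum_hasSum {m : ℕ} (φ : EllFormData m) (M M' : ℕ) (hM : 0 < M) (hMM : M * M' = m) (l : ℤ) :
    HasSum (fun p => vTerm φ M M' l p)
      (∫ x in (0:ℝ)..1, ∑ k ∈ Finset.range M, fpt φ M l k (rhoPt + x)) := by
  have him : ∀ x : ℝ, 0 < (rhoPt + x).im := fun x => by simpa using rhoPt_im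
  have h := intervalIntegral.hasSum_integral_of_dominated_convergence
    (μ := volume) (a := 0) (b := 1)
    (F := fun p (x : ℝ) => uTerm φ M M' l p (rhoPt + x))
    (f := fun x : ℝ => ∑ k ∈ Finset.range M, fpt φ M l k (rhoPt + x))
    (fun p _ => ‖uTerm φ M M' l p rhoPt‖) ?_ ?_ ?_ ?_ ?_
  · simpa only [uTerm_int φ M M' hM] using h
  · intro p
    apply Continuous.aestronglyMeasurable
    unfold uTerm ee
    fun_prop
  · intro p
    exact Filter.Eventually.of_forall fun x _ => (uTerm_norm φ M M' l p rhoPt x).le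
  · exact Filter.Eventually.of_forall fun x _ =>
      (fpt_hasSum φ M M' hM hMM l rhoPt rhoPt_im).summable.norm
  · simp
  · exact Filter.Eventually.of_forall fun x _ => fpt_hasSum φ M M' hM hMM l _ (him x)

/-- reindexed terms -/
def pTerm (C : ℤ → ℤ → ℂ) (M M' : ℕ) (l s : ℤ) : ℂ :=
  C (-(M * s + M' * l) ^ 2) (M * s - M' * l)

lemma pTerm_hasSum {m : ℕ} (φ : EllFormData m) (M M' : ℕ) (hM : 0 < M) (hMM : M * M' = m) (l : ℤ) :
    HasSum (fun s => pTerm φ.coeff M M' l s * (M : ℂ))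
      (∫ x in (0:ℝ)..1, ∑ k ∈ Finset.range M, fpt φ M l k (rhoPt + x)) := by
  have h := sum_hasSum φ M M' hM hMM l
  have hMz : (M : ℤ) ≠ 0 := by exact_mod_cast hM.ne'
  have hinj : Function.Injective (fun s : ℤ => ((-l * s, M * s - M' * l) : ℤ × ℤ)) := by
    intro s s' hs
    simp only [Prod.mk.injEq] at hs
    have := hs.2
    apply mul_left_cancel₀ hMz
    linarith
  rw [← hinj.hasSum_iff] at h
  · refine h.congr_fun ?_
    intro s
    simp only [Function.comp, vTerm, pTerm]
    rw [if_pos]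
    · congr 2
      rw [← hMM]; push_cast; ring
    · exact ⟨⟨s, by ring⟩, by ring⟩
  · rintro ⟨n, r⟩ hp
    unfold vTerm
    rw [if_neg]
    rintro ⟨⟨s, hs⟩, h2⟩
    apply hp
    refine ⟨s, ?_⟩
    simp only [Prod.mk.injEq] at *
    rw [hs] at h2
    refine ⟨?_, by linarith⟩
    apply mul_left_cancel₀ hMz
    linarith

lemma key {m : ℕ} (φ : EllFormData m) (hmod : ModularLaw 2 m φ.toFun) (M M' : ℕ)
    (hM : 0 < M) (hMM : M * M' = m) :
    (∀ l : ℤ, Summable (fun s => pTerm φ.coeff M M' l s)) ∧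
    ∑ l ∈ Finset.range M, ∑' s, pTerm φ.coeff M M' l s = 0 := by
  have hMc : (M : ℂ) ≠ 0 := by exact_mod_cast hM.ne'
  constructor
  · intro l
    exact (summable_mul_right_iff hMc).1 (pTerm_hasSum φ M M' hM hMM l).summable
  · have h0 := aux_int_zero (fun τ => ∑ l ∈ Finset.range M, ∑ k ∈ Finset.range M, fpt φ M l k τ)
      (fun τ hτ => by
        refine DifferentiableAt.fun_sum fun l _ => DifferentiableAt.fun_sum fun k _ => ?_
        exact fpt_diff φ M l k τ hτ)
      (fun τ hτ => sum_fpt_S φ hmod M M' hM hMM τ hτ)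
    rw [intervalIntegral.integral_finsetSum] at h0
    · have h1 : ∀ l ∈ Finset.range M,
          (∫ x in (0:ℝ)..1, ∑ k ∈ Finset.range M, fpt φ M l k (rhoPt + x)) =
          (∑' s, pTerm φ.coeff M M' l s) * M := by
        intro l _
        rw [← (pTerm_hasSum φ M M' hM hMM l).tsum_eq, tsum_mul_right]
      rw [Finset.sum_congr rfl h1, ← Finset.sum_mul] at h0
      exact (mul_eq_zero.1 h0).resolve_right hMc
    · intro l _
      apply Continuous.intervalIntegrable
      refine continuous_finsetSum _ fun k _ => ?_
      rw [continuous_iff_continuousAt]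
      intro x
      have : ContinuousAt (fpt φ M l k) (rhoPt + x) :=
        (fpt_diff φ M l k _ (by simpa using rhoPt_im)).continuousAt
      exact ContinuousAt.comp (f := fun x : ℝ => rhoPt + (x : ℂ)) this (by fun_prop)

lemma pTerm_shift {m : ℕ} (φ : EllFormData m) (M M' : ℕ) (hMM : M * M' = m) (l s q : ℤ) :
    pTerm φ.coeff M M' (l - M * q) (s + M' * q) = pTerm φ.coeff M M' l s := by
  have hp : ∀ (Δ l q : ℤ), φ.coeff Δ (l + q * (2 * (m : ℤ))) = φ.coeff Δ l := by
    intro Δ l q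
    exact Function.Periodic.int_mul (f := φ.coeff Δ) (φ.periodic Δ) q l
  unfold pTerm
  rw [← hp _ (M * s - M' * l) q]
  congr 1
  · ring_nf
  · rw [← hMM]; push_cast; ring

/-- the reindexing map -/
def reidx (M M' t : ℕ) (a b : ℤ) (gA gB : ℤ) (hM : 0 < M) (x : ℤ × Fin t) : Fin M × ℤ :=
  (⟨((x.1 * gB - a * (x.2 : ℕ)) % M).toNat, by
      have h1 := Int.emod_nonneg (x.1 * gB - a * (x.2 : ℕ)) (b := (M : ℤ)) (by omega)
      have h2 := Int.emod_lt_of_pos (x.1 * gB - a * (x.2 : ℕ)) (b := (M : ℤ)) (by omega)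
      omega⟩,
    x.1 * gA + b * (x.2 : ℕ) + M' * ((x.1 * gB - a * (x.2 : ℕ)) / M))

lemma reidx_bij (M M' t : ℕ) (a b gA gB : ℤ) (hM : 0 < M) (ht : 0 < t) (ha : (M : ℤ) = a * t)
    (hb : (M' : ℤ) = b * t) (hg : a * gA + b * gB = 1) :
    Function.Bijective (reidx M M' t a b gA gB hM) := by
  have hMz : (M : ℤ) ≠ 0 := by omega
  have htz : (t : ℤ) ≠ 0 := by omega
  have ha0 : a ≠ 0 := by rintro rfl; simp at ha; omega
  constructor
  · rintro ⟨r, j⟩ ⟨r', j'⟩ h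
    simp only [reidx, Prod.mk.injEq, Fin.mk.injEq] at h
    obtain ⟨h1, h2⟩ := h
    have n1 := Int.emod_nonneg (r * gB - a * (j : ℕ)) hMz
    have n2 := Int.emod_nonneg (r' * gB - a * (j' : ℕ)) hMz
    have h1' : (r * gB - a * (j : ℕ)) % M = (r' * gB - a * (j' : ℕ)) % M := by omega
    have d1 := Int.emod_add_mul_ediv (r * gB - a * (j : ℕ)) M
    have d2 := Int.emod_add_mul_ediv (r' * gB - a * (j' : ℕ)) M
    rw [h1'] at d1
    generalize (r * gB - a * (j : ℕ)) / (M : ℤ) = q at *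
    generalize (r' * gB - a * (j' : ℕ)) / (M : ℤ) = q' at *
    generalize (r' * gB - a * (j' : ℕ)) % (M : ℤ) = e at *
    rw [ha] at d1 d2
    rw [hb] at h2
    have hr : r = r' := by
      have e1 : r = r * (a * gA + b * gB) := by rw [hg, mul_one]
      have e2 : r' = r' * (a * gA + b * gB) := by rw [hg, mul_one]
      rw [e1, e2]
      linear_combination a * h2 - b * d1 + b * d2
    subst hr
    have hj : a * ((j : ℕ) - (j' : ℕ) : ℤ) = a * (t * (q' - q)) := by
      linear_combination d1 - d2
    have hj2 := mul_left_cancel₀ ha0 hj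
    have l1 : ((j : ℕ) : ℤ) < t := by exact_mod_cast j.2
    have l2 : ((j' : ℕ) : ℤ) < t := by exact_mod_cast j'.2
    have : ((j : ℕ) - (j' : ℕ) : ℤ) = 0 := by
      apply Int.eq_zero_of_abs_lt_dvd ⟨_, hj2⟩
      rw [abs_lt]; constructor <;> omega
    have hjj : j = j' := Fin.ext (by omega)
    rw [hjj]
  · rintro ⟨l, s⟩
    set k : ℤ := s * gB - (l : ℕ) * gA with hk
    have k0 := Int.emod_nonneg k htz
    have k1 := Int.emod_lt_of_pos k (b := (t : ℤ)) (by omega)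
    have kd := Int.emod_add_mul_ediv k t
    refine ⟨(a * s + b * (l : ℕ), ⟨(k % t).toNat, by omega⟩), ?_⟩
    have e1 : (((k % t).toNat : ℕ) : ℤ) = k % t := by omega
    have e2 : (a * s + b * (l : ℕ)) * gB - a * (k % t) = (l : ℕ) + (M : ℤ) * (k / t) := by
      rw [ha]
      linear_combination (-a) * kd + a * hk + (l : ℕ) * hg
    have ll : ((l : ℕ) : ℤ) < M := by exact_mod_cast l.2
    have e3 : ((l : ℕ) + (M : ℤ) * (k / t)) % M = (l : ℕ) := by
      rw [Int.add_mul_emod_self_left, Int.emod_eq_of_lt (by omega) ll]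
    have e4 : ((l : ℕ) + (M : ℤ) * (k / t)) / M = k / t := by
      rw [Int.add_mul_ediv_left _ _ hMz, Int.ediv_eq_zero_of_lt (by omega) ll, zero_add]
    simp only [reidx, e1, e2, e3, e4, Prod.mk.injEq]
    constructor
    · apply Fin.ext; simp
    · rw [hb]
      linear_combination b * kd + b * hk + s * hg

lemma rfactor_zero {m : ℕ} (φ : EllFormData m) (hmod : ModularLaw 2 m φ.toFun) (m₁ m₂ : ℕ)
    (h1 : 0 < m₁) (hmm : m₁ * m₂ = m) : Rfactor m φ.coeff m₁ m₂ = 0 := by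
  obtain ⟨hs, hz⟩ := key φ hmod m₁ m₂ h1 hmm
  have ht : 0 < Nat.gcd m₁ m₂ := Nat.gcd_pos_of_pos_left _ h1
  unfold Rfactor
  have ha : m₁ = m₁ / Nat.gcd m₁ m₂ * Nat.gcd m₁ m₂ :=
    (Nat.div_mul_cancel (Nat.gcd_dvd_left _ _)).symm
  have hb : m₂ = m₂ / Nat.gcd m₁ m₂ * Nat.gcd m₁ m₂ :=
    (Nat.div_mul_cancel (Nat.gcd_dvd_right _ _)).symm
  have hco := Nat.coprime_div_gcd_div_gcd ht
  generalize Nat.gcd m₁ m₂ = t at *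
  generalize m₁ / t = a at *
  generalize m₂ / t = b at *
  have hg : (a : ℤ) * Nat.gcdA a b + b * Nat.gcdB a b = 1 := by
    rw [← Nat.gcd_eq_gcd_ab, hco]; rfl
  have ha' : (m₁ : ℤ) = a * t := by exact_mod_cast ha
  have hb' : (m₂ : ℤ) = b * t := by exact_mod_cast hb
  have hbij := reidx_bij m₁ m₂ t a b (Nat.gcdA a b) (Nat.gcdB a b) h1 ht ha' hb' hg
  have hsum : Summable (fun x : Fin m₁ × ℤ => pTerm φ.coeff m₁ m₂ (x.1 : ℕ) x.2) := by
    apply Summable.of_norm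
    rw [summable_prod_of_nonneg (fun _ => norm_nonneg _)]
    exact ⟨fun l => (hs ((l : ℕ) : ℤ)).norm, Summable.of_finite⟩
  have hz2 : ∑' x : Fin m₁ × ℤ, pTerm φ.coeff m₁ m₂ (x.1 : ℕ) x.2 = 0 := by
    rw [Finset.sum_range] at hz
    rw [hsum.tsum_prod, tsum_fintype]
    exact hz
  rw [← (Equiv.ofBijective _ hbij).tsum_eq] at hz2
  have hsum2 := (Equiv.ofBijective _ hbij).summable_iff.2 hsum
  have hdiv : 2 * (m : ℤ) / (t : ℤ) ^ 2 = 2 * a * b := by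
    apply Int.ediv_eq_of_eq_mul_left (by positivity)
    rw [← hmm]; push_cast; rw [ha', hb']; ring
  have hterm : ∀ x : ℤ × Fin t,
      pTerm φ.coeff m₁ m₂ ((Equiv.ofBijective _ hbij x).1 : ℕ) (Equiv.ofBijective _ hbij x).2 =
      φ.coeff (-(x.1 ^ 2) * (t : ℤ) ^ 2)
        ((lstar a b x.1 + 2 * (m : ℤ) / (t : ℤ) ^ 2 * ((x.2 : ℕ) : ℤ)) * (t : ℤ)) := by
    rintro ⟨r, j⟩
    simp only [Equiv.ofBijective_apply, reidx]
    set y : ℤ := r * Nat.gcdB a b - a * (j : ℕ) with hy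
    have n1 := Int.emod_nonneg y (b := (m₁ : ℤ)) (by omega)
    have e1 : (((y % m₁).toNat : ℕ) : ℤ) = y - m₁ * (y / m₁) := by
      have := Int.emod_add_mul_ediv y m₁
      omega
    rw [e1, pTerm_shift φ m₁ m₂ hmm, hdiv]
    unfold pTerm lstar
    have er : (m₁ : ℤ) * (r * Nat.gcdA a b + b * (j : ℕ)) + m₂ * y = r * t := by
      rw [ha', hb', hy]
      linear_combination r * t * hg
    rw [er]
    congr 1
    · ring
    · rw [ha', hb', hy]; ring
  have hf : (fun x : ℤ × Fin t => pTerm φ.coeff m₁ m₂ ((Equiv.ofBijective _ hbij x).1 : ℕ)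
      (Equiv.ofBijective _ hbij x).2) = _ := funext hterm
  have hsum3 : Summable (fun x : ℤ × Fin t => pTerm φ.coeff m₁ m₂
      ((Equiv.ofBijective _ hbij x).1 : ℕ) (Equiv.ofBijective _ hbij x).2) := hsum2
  rw [hf] at hsum3 hz2
  rw [hsum3.tsum_prod] at hz2
  rw [← hz2]
  refine tsum_congr fun r => ?_
  rw [tsum_fintype]
  unfold CoeffU
  rw [Finset.sum_range]

/-- Theorem: for a weakly holomorphic Jacobi form `φ` of weight 2 and index `m`,
`R_{m₁,m₂}(φ) = 0` for every unordered factorization `m = m₁·m₂`; in particular (taking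
`m₁ = 1`), `R[φ] = ∑_{r∈ℤ} c_φ(0,r) = 0`. -/
theorem weakly_holomorphic_residues_vanish (m : ℕ) (hm : 0 < m) (φ : EllFormData m)
    (hmod : ModularLaw 2 m φ.toFun)
    (hwh : ∃ n₀ : ℤ, ∀ n r : ℤ, n < n₀ → φ.coeff (4 * (m : ℤ) * n - r ^ 2) r = 0) :
    (∀ m₁ m₂ : ℕ, m₁ * m₂ = m → Rfactor m φ.coeff m₁ m₂ = 0) ∧
    (∑' r : ℤ, φ.coeff (-(r ^ 2)) r) = 0 := by
  refine ⟨?_, ?_⟩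
  · intro m₁ m₂ h
    have h1 : 0 < m₁ := Nat.pos_of_ne_zero (by rintro rfl; simp at h; omega)
    exact rfactor_zero φ hmod m₁ m₂ h1 h
  · have h := (key φ hmod 1 m one_pos (one_mul m)).2
    simpa [pTerm] using h
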